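/- Let d ∈ ℕ, 0 < α < d, and let p, q, r satisfy 1 < p < d/α, 1 < q < d/α, and 1/p + 1/q = 1/r + α/d. Then there exists a constant C = C(α, d, p, q) > 0, independent of θ, such that for every θ ∈ [0,1] and all nonnegative measurable functions f ∈ L^p(ℝ^d) and g ∈ L^q(ℝ^d), one has ‖I_α^θ(f,g)‖_{L^r(ℝ^d)} ≤ C ‖f‖_{L^p(ℝ^d)} ‖g‖_{L^q(ℝ^d)}. -/

import Mathlib

open MeasureTheory ENNReal

/-- The bilinear fractional integral operator
`I_α^θ(f,g)(x) = ∫_{ℝ^d} f(x + (θ−1)y) g(x + θy) |y|^{α−d} dy`,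
taken in the extended-real sense. -/
noncomputable def Iop (d : ℕ) (α θ : ℝ)
    (f g : EuclideanSpace ℝ (Fin d) → ℝ≥0∞) (x : EuclideanSpace ℝ (Fin d)) : ℝ≥0∞ :=
  ∫⁻ y : EuclideanSpace ℝ (Fin d),
    f (x + (θ - 1) • y) * g (x + θ • y) * ENNReal.ofReal (‖y‖ ^ (α - (d : ℝ)))

/-- The `L^p` quasi-norm `(∫ |h|^p)^{1/p}` for a nonnegative (extended-real valued)
function `h` on `ℝ^d`. -/
noncomputable def LpNorm (d : ℕ) (p : ℝ)
    (h : EuclideanSpace ℝ (Fin d) → ℝ≥0∞) : ℝ≥0∞ :=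
  (∫⁻ x : EuclideanSpace ℝ (Fin d), h x ^ p) ^ (1 / p)

/-!
Decompose the kernel dyadically, so that the operator is dominated by the sum over `k` of
`2 ^ (α k) T_k`, where `T_k (f, g) (x)` averages `f (x + (θ - 1) y) g (x + θ y)` over `|y| ≲ 2 ^ k`.
Reflecting `y` exchanges `θ` with `1 - θ` and `f` with `g`, so take `θ ≤ 1 / 2`. Pairing `T_k` with
a test function `h` and centring `x` at the argument of `f` leaves an integral of `g` against a
dilation of `h` by a factor `1 - θ ≥ 1 / 2`; Hölder's inequality therefore bounds the mean of
`T_k (f, g) h` over a ball of radius `2 ^ k`, uniformly in `θ`, by the mean of `f` times the local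
`L^s` and `L^s'` means of `g` and `h`. The latter are dominated by the maximal functions `M_s g` and
`M_s' h`, while Hedberg's argument sums `2 ^ (α k)` times the means of `f` to
`H f = ‖f‖_p ^ (α p / d) (M f) ^ (1 - α p / d)`. This bounds the `L^r` quasi-norm of the dyadic sum
by that of `H f * M_s g`, through duality when `1 < r < s`, and through subadditivity of `t ↦ t ^ r`
and Jensen's inequality, with `h = 1`, when `r ≤ 1`. Hölder's inequality and the maximal theorem,
with `s < q`, conclude.
-/

open Metric Module
open scoped NNReal

section DyadicSums

lemma two_rpow_add (x y : ℝ) : (2 : ℝ≥0∞) ^ (x + y) = 2 ^ x * 2 ^ y :=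
  ENNReal.rpow_add x y two_ne_zero ofNat_ne_top

lemma tsum_two_rpow_neg_mul_abs_ne_top {c : ℝ} (hc : 0 < c) :
    ∑' k : ℤ, (2 : ℝ≥0∞) ^ (-c * |(k : ℝ)|) ≠ ∞ := by
  have geometric : Summable fun n : ℕ ↦ (2 : ℝ) ^ (-c * n) := by
    simp_rw [Real.rpow_mul_natCast zero_le_two]
    exact summable_geometric_of_lt_one (by positivity)
      (Real.rpow_lt_one_of_one_lt_of_neg one_lt_two (neg_lt_zero.2 hc))
  have two_sided : Summable fun k : ℤ ↦ (2 : ℝ) ^ (-c * |(k : ℝ)|) :=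
    .of_nat_of_neg (by simpa using geometric) (by simpa using geometric)
  have coe_eq (k : ℤ) :
      (2 : ℝ≥0∞) ^ (-c * |(k : ℝ)|) = ENNReal.ofReal ((2 : ℝ) ^ (-c * |(k : ℝ)|)) := by
    rw [← ofReal_rpow_of_pos two_pos, ofReal_ofNat]
  simp_rw [coe_eq]
  exact two_sided.tsum_ofReal_ne_top

lemma exists_eq_two_rpow {A : ℝ≥0∞} (h₀ : A ≠ 0) (h : A ≠ ∞) : ∃ x : ℝ, A = 2 ^ x := by
  refine ⟨Real.logb 2 A.toReal, ?_⟩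
  rw [← ofReal_ofNat 2, ofReal_rpow_of_pos two_pos,
    Real.rpow_logb two_pos (by norm_num) (toReal_pos h₀ h), ofReal_toReal h]

-- With `A = 2 ^ x` and `B = 2 ^ y`, both sequences take the value on the right at
-- `k = (y - x) / (a + b)`, and their minimum decays geometrically away from there.
lemma min_two_rpow_le {a b x y : ℝ} (ha : 0 < a) (hb : 0 < b) (k : ℤ) :
    min ((2 : ℝ≥0∞) ^ x * 2 ^ (a * k)) (2 ^ y * 2 ^ (-b * k)) ≤
      2 ^ min a b * ((2 ^ x) ^ (b / (a + b)) * (2 ^ y) ^ (a / (a + b))) *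
        2 ^ (-min a b * |((k - ⌊(y - x) / (a + b)⌋ : ℤ) : ℝ)|) := by
  set τ := (y - x) / (a + b) with hτ
  set c := min a b
  have crossing : x + a * τ = x * (b / (a + b)) + y * (a / (a + b)) := by
    rw [hτ]; field_simp; ring
  have crossing' : y - b * τ = x * (b / (a + b)) + y * (a / (a + b)) := by
    rw [hτ]; field_simp; ring
  have hc : 0 < c := lt_min ha hb
  have near : |((k - ⌊τ⌋ : ℤ) : ℝ)| ≤ |k - τ| + 1 := by
    push_cast
    rw [show (k : ℝ) - ⌊τ⌋ = (k - τ) + Int.fract τ by rw [Int.fract]; ring]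
    refine (abs_add_le _ _).trans (add_le_add_right ?_ _)
    exact (abs_of_nonneg (Int.fract_nonneg τ)).trans_le (Int.fract_lt_one τ).le
  have near_mul := mul_le_mul_of_nonneg_left near hc.le
  simp_rw [← ENNReal.rpow_mul, ← two_rpow_add, ← crossing]
  rcases le_total (k : ℝ) τ with hk | hk
  · refine (min_le_left _ _).trans (rpow_le_rpow_of_exponent_le one_le_two ?_)
    rw [abs_of_nonpos (sub_nonpos.2 hk)] at near_mul
    nlinarith [min_le_left a b]
  · refine (min_le_right _ _).trans (rpow_le_rpow_of_exponent_le one_le_two ?_)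
    rw [abs_of_nonneg (sub_nonneg.2 hk)] at near_mul
    nlinarith [min_le_right a b]

theorem exists_tsum_min_two_rpow_le {a b : ℝ} (ha : 0 < a) (hb : 0 < b) :
    ∃ K : ℝ≥0, ∀ A B : ℝ≥0∞,
      ∑' k : ℤ, min (A * 2 ^ (a * k)) (B * 2 ^ (-b * k)) ≤
        K * (A ^ (b / (a + b)) * B ^ (a / (a + b))) := by
  set c := min a b
  have hc : 0 < c := lt_min ha hb
  have K_ne_top : (2 : ℝ≥0∞) ^ c * ∑' k : ℤ, 2 ^ (-c * |(k : ℝ)|) ≠ ∞ :=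
    mul_ne_top (by simp) (tsum_two_rpow_neg_mul_abs_ne_top hc)
  have K_ne_zero : (2 : ℝ≥0∞) ^ c * ∑' k : ℤ, 2 ^ (-c * |(k : ℝ)|) ≠ 0 :=
    mul_ne_zero (by simp) (ne_of_gt (lt_of_lt_of_le (by simp) (ENNReal.le_tsum 0)))
  refine ⟨(2 ^ c * ∑' k : ℤ, (2 : ℝ≥0∞) ^ (-c * |(k : ℝ)|)).toNNReal, fun A B ↦ ?_⟩
  rw [coe_toNNReal K_ne_top]
  rcases eq_or_ne A 0 with rfl | hA₀
  · simp
  rcases eq_or_ne B 0 with rfl | hB₀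
  · simp
  rcases eq_or_ne A ∞ with rfl | hA
  · rw [top_rpow_of_pos (by positivity),
      top_mul (by simp [hB₀, ha.le, hb.le, add_nonneg, div_nonneg]), mul_top K_ne_zero]
    exact le_top
  rcases eq_or_ne B ∞ with rfl | hB
  · rw [top_rpow_of_pos (by positivity),
      mul_top (by simp [hA₀, ha.le, hb.le, add_nonneg, div_nonneg]), mul_top K_ne_zero]
    exact le_top
  obtain ⟨x, rfl⟩ := exists_eq_two_rpow hA₀ hA
  obtain ⟨y, rfl⟩ := exists_eq_two_rpow hB₀ hB
  set P := ((2 : ℝ≥0∞) ^ x) ^ (b / (a + b)) * (2 ^ y) ^ (a / (a + b))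
  set n := ⌊(y - x) / (a + b)⌋
  calc ∑' k : ℤ, min ((2 : ℝ≥0∞) ^ x * 2 ^ (a * k)) (2 ^ y * 2 ^ (-b * k))
      ≤ ∑' k : ℤ, 2 ^ c * P * 2 ^ (-c * |((k - n : ℤ) : ℝ)|) :=
        ENNReal.tsum_le_tsum (min_two_rpow_le ha hb)
    _ = 2 ^ c * P * ∑' k : ℤ, 2 ^ (-c * |(k : ℝ)|) := by
        rw [ENNReal.tsum_mul_left]
        exact congrArg (2 ^ c * P * ·)
          ((Equiv.subRight n).tsum_eq fun k : ℤ ↦ (2 : ℝ≥0∞) ^ (-c * |(k : ℝ)|))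
    _ = 2 ^ c * (∑' k : ℤ, 2 ^ (-c * |(k : ℝ)|)) * P := by ring

theorem exists_tsum_min_two_rpow_rpow_le {a b t : ℝ} (ha : 0 < a) (hb : 0 < b) (ht : 0 < t) :
    ∃ K : ℝ≥0, ∀ A B : ℝ≥0∞,
      ∑' k : ℤ, min (A * 2 ^ (a * k)) (B * 2 ^ (-b * k)) ^ t ≤
        K * (A ^ (b / (a + b)) * B ^ (a / (a + b))) ^ t := by
  obtain ⟨K, hK⟩ := exists_tsum_min_two_rpow_le (mul_pos ha ht) (mul_pos hb ht)
  have term_eq (A B : ℝ≥0∞) (k : ℤ) : min (A * 2 ^ (a * k)) (B * 2 ^ (-b * k)) ^ t =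
      min (A ^ t * 2 ^ (a * t * k)) (B ^ t * 2 ^ (-(b * t) * k)) := by
    rw [(monotone_rpow_of_nonneg ht.le).map_min, mul_rpow_of_nonneg _ _ ht.le,
      mul_rpow_of_nonneg _ _ ht.le, ← ENNReal.rpow_mul, ← ENNReal.rpow_mul]
    ring_nf
  refine ⟨K, fun A B ↦ ?_⟩
  simp_rw [term_eq]
  refine (hK (A ^ t) (B ^ t)).trans_eq ?_
  rw [← add_mul, mul_div_mul_right _ _ ht.ne', mul_div_mul_right _ _ ht.ne',
    mul_rpow_of_nonneg _ _ ht.le]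
  simp_rw [← ENNReal.rpow_mul, mul_comm t]

lemma rpow_tsum_le_tsum_rpow {ι : Type*} {r : ℝ} (hr₀ : 0 < r) (hr₁ : r ≤ 1) (a : ι → ℝ≥0∞) :
    (∑' i, a i) ^ r ≤ ∑' i, a i ^ r := by
  rw [← le_rpow_inv_iff hr₀]
  refine ENNReal.summable.tsum_le_of_sum_le fun s ↦ ?_
  rw [le_rpow_inv_iff hr₀]
  calc (∑ i ∈ s, a i) ^ r ≤ ∑ i ∈ s, a i ^ r :=
        s.le_sum_of_subadditive (· ^ r) (zero_rpow_of_pos hr₀).le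
          (fun x y ↦ rpow_add_le_add_rpow x y hr₀.le hr₁) a
    _ ≤ ∑' i, a i ^ r := ENNReal.sum_le_tsum s

end DyadicSums

section LpNorms

variable {X : Type*} [MeasurableSpace X] {μ : Measure X}

lemma lintegral_Ioi_indicator_rpow {a : ℝ} (ha : 0 < a) (t : ℝ≥0∞) :
    ∫⁻ s in Set.Ioi (0 : ℝ), {s | ENNReal.ofReal s < t}.indicator
      (fun s ↦ ENNReal.ofReal (s ^ (a - 1))) s = t ^ a / ENNReal.ofReal a := by
  induction t with
  | top =>
    have divergent := not_integrableOn_Ioi_rpow (a - 1)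
    rw [IntegrableOn, ← lintegral_ofReal_ne_top_iff_integrable (by fun_prop)
      ((ae_restrict_iff' measurableSet_Ioi).2 (.of_forall fun s hs ↦ Real.rpow_nonneg hs.le _)),
      not_not] at divergent
    simpa [ha, top_div] using divergent
  | coe t =>
    have set_eq : Set.Ioi (0 : ℝ) ∩ {s | ENNReal.ofReal s < t} = Set.Ioo 0 (t : ℝ) := by
      ext s
      simp +contextual [Set.mem_Ioo, ofReal_lt_coe_iff, le_of_lt]
    have hm : MeasurableSet {s : ℝ | ENNReal.ofReal s < t} :=
      measurableSet_lt (by fun_prop) measurable_const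
    have integrable : IntegrableOn (fun s : ℝ ↦ s ^ (a - 1)) (Set.Ioo 0 t) :=
      ((intervalIntegral.intervalIntegrable_rpow' (by linarith)).1).mono_set
        Set.Ioo_subset_Ioc_self
    rw [lintegral_indicator hm, Measure.restrict_restrict hm, Set.inter_comm, set_eq,
      ← ofReal_integral_eq_lintegral_ofReal integrable ((ae_restrict_iff' measurableSet_Ioo).2
        (.of_forall fun s hs ↦ Real.rpow_nonneg hs.1.le _)), ← integral_Ioc_eq_integral_Ioo,
      ← intervalIntegral.integral_of_le t.coe_nonneg, integral_rpow (.inl (by linarith)),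
      sub_add_cancel, Real.zero_rpow ha.ne', sub_zero, ofReal_div_of_pos ha,
      ← ofReal_rpow_of_nonneg t.coe_nonneg ha.le, ofReal_coe_nnreal]

theorem lintegral_mul_rpow_eq_lintegral_setLIntegral_lt [SFinite μ] {w F : X → ℝ≥0∞}
    (hw : Measurable w) (hF : Measurable F) {a : ℝ} (ha : 0 < a) :
    ∫⁻ x, w x * F x ^ a ∂μ = ENNReal.ofReal a * ∫⁻ t in Set.Ioi (0 : ℝ),
      ENNReal.ofReal (t ^ (a - 1)) * ∫⁻ x in {x | ENNReal.ofReal t < F x}, w x ∂μ := by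
  set I : X → ℝ → ℝ≥0∞ := fun x t ↦
    w x * {t | ENNReal.ofReal t < F x}.indicator (fun t ↦ ENNReal.ofReal (t ^ (a - 1))) t
  have hI : Measurable (Function.uncurry I) := by
    refine (hw.comp measurable_fst).mul ?_
    exact Measurable.indicator (s := {z : X × ℝ | ENNReal.ofReal z.2 < F z.1})
      (f := fun z ↦ ENNReal.ofReal (z.2 ^ (a - 1))) (by fun_prop)
      (measurableSet_lt (by fun_prop) (by fun_prop))
  have inner (x : X) : w x * F x ^ a = ENNReal.ofReal a * ∫⁻ t in Set.Ioi (0 : ℝ), I x t := by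
    rw [lintegral_const_mul _ (Measurable.indicator (by fun_prop)
      (measurableSet_lt (by fun_prop) measurable_const)), lintegral_Ioi_indicator_rpow ha,
      mul_left_comm, ENNReal.mul_div_cancel (by simpa using ha) ofReal_ne_top]
  have slice (t : ℝ) : ∫⁻ x, I x t ∂μ =
      ENNReal.ofReal (t ^ (a - 1)) * ∫⁻ x in {x | ENNReal.ofReal t < F x}, w x ∂μ := by
    rw [← lintegral_const_mul _ hw, ← lintegral_indicator (measurableSet_lt measurable_const hF)]
    refine lintegral_congr fun x ↦ ?_
    by_cases hx : ENNReal.ofReal t < F x <;> simp [I, hx, mul_comm]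
  simp_rw [inner, ← slice]
  rw [lintegral_const_mul _ hI.lintegral_prod_right, lintegral_lintegral_swap hI.aemeasurable]

lemma mul_mul_rpow_sub_one {p : ℝ} (hp : 1 ≤ p) (a c : ℝ≥0∞) :
    a * (c * a) ^ (p - 1) = c ^ (p - 1) * a ^ p := by
  have hp' : 0 ≤ p - 1 := sub_nonneg.2 hp
  nth_rw 3 [← add_sub_cancel 1 p]
  rw [mul_rpow_of_nonneg _ _ hp', mul_left_comm, rpow_add_of_nonneg _ _ zero_le_one hp', rpow_one]

theorem lintegral_rpow_le_of_mul_measure_lt_le [SFinite μ] {p : ℝ} (hp : 1 < p) {C c : ℝ≥0∞}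
    {f F : X → ℝ≥0∞} (hf : Measurable f) (hF : Measurable F)
    (weak_type : ∀ t : ℝ, 0 < t → ENNReal.ofReal t * μ {x | ENNReal.ofReal t < F x} ≤
      C * ∫⁻ x in {x | ENNReal.ofReal t < c * f x}, f x ∂μ) :
    ∫⁻ x, F x ^ p ∂μ ≤
      C * ENNReal.ofReal p / ENNReal.ofReal (p - 1) * c ^ (p - 1) * ∫⁻ x, f x ^ p ∂μ := by
  have hp' : 0 < p - 1 := sub_pos.2 hp
  have tail := lintegral_mul_rpow_eq_lintegral_setLIntegral_lt (μ := μ) hf (hf.const_mul c) hp'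
  have pointwise : ∀ t ∈ Set.Ioi (0 : ℝ),
      ENNReal.ofReal (t ^ (p - 1)) * ∫⁻ _ in {x | ENNReal.ofReal t < F x}, 1 ∂μ ≤
        C * (ENNReal.ofReal (t ^ (p - 1 - 1)) *
          ∫⁻ x in {x | ENNReal.ofReal t < c * f x}, f x ∂μ) := by
    intro t (ht : 0 < t)
    rw [setLIntegral_one]
    calc _ = ENNReal.ofReal (t ^ (p - 1) / t) *
            (ENNReal.ofReal t * μ {x | ENNReal.ofReal t < F x}) := by
          rw [← mul_assoc, ← ofReal_mul (by positivity), div_mul_cancel₀ _ ht.ne']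
      _ ≤ ENNReal.ofReal (t ^ (p - 1) / t) *
            (C * ∫⁻ x in {x | ENNReal.ofReal t < c * f x}, f x ∂μ) :=
          mul_le_mul_right (weak_type t ht) _
      _ = _ := by rw [mul_left_comm, Real.rpow_sub_one ht.ne' (p - 1)]
  have hmeas : Measurable fun t : ℝ ↦ ENNReal.ofReal (t ^ (p - 1 - 1)) *
      ∫⁻ x in {x | ENNReal.ofReal t < c * f x}, f x ∂μ := by
    refine Measurable.mul (by fun_prop) (Antitone.measurable fun s t hst ↦ ?_)
    exact lintegral_mono_set fun x hx ↦ (ofReal_le_ofReal hst).trans_lt hx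
  calc ∫⁻ x, F x ^ p ∂μ
      = ENNReal.ofReal p * ∫⁻ t in Set.Ioi (0 : ℝ), ENNReal.ofReal (t ^ (p - 1)) *
          ∫⁻ _ in {x | ENNReal.ofReal t < F x}, 1 ∂μ := by
        simpa using lintegral_mul_rpow_eq_lintegral_setLIntegral_lt (μ := μ)
          measurable_one hF (zero_lt_one.trans hp)
    _ ≤ ENNReal.ofReal p * (C * ∫⁻ t in Set.Ioi (0 : ℝ), ENNReal.ofReal (t ^ (p - 1 - 1)) *
          ∫⁻ x in {x | ENNReal.ofReal t < c * f x}, f x ∂μ) := by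
        rw [← lintegral_const_mul _ hmeas]
        exact mul_le_mul_right (setLIntegral_mono (hmeas.const_mul C) pointwise) _
    _ = C * ENNReal.ofReal p / ENNReal.ofReal (p - 1) * ∫⁻ x, f x * (c * f x) ^ (p - 1) ∂μ := by
        rw [tail, ← mul_assoc (C * _ / _), ENNReal.div_mul_cancel (by simpa using hp)
          ofReal_ne_top]
        ring
    _ = _ := by
        rw [mul_assoc _ (c ^ (p - 1)), ← lintegral_const_mul (c ^ (p - 1)) (hf.pow_const p)]
        simp_rw [mul_mul_rpow_sub_one hp.le]

theorem eLpNorm'_le_of_forall_lintegral_mul_le [SigmaFinite μ] {r s : ℝ}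
    (hrs : r.HolderConjugate s) {F : X → ℝ≥0∞} {A : ℝ≥0∞}
    (bound : ∀ h : X → ℝ≥0∞, Measurable h → ∫⁻ x, F x * h x ∂μ ≤ A * eLpNorm' h s μ) :
    eLpNorm' F r μ ≤ A := by
  have subfunction_le {G : X → ℝ≥0∞} (hG : Measurable G) (hGF : ∀ x, G x ≤ F x ^ r)
      (hfin : ∫⁻ x, G x ∂μ ≠ ∞) : ∫⁻ x, G x ∂μ ≤ A ^ r := by
    rcases eq_or_ne (∫⁻ x, G x ∂μ) 0 with h₀ | h₀
    · simp [h₀]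
    have split_le : ∫⁻ x, G x ∂μ ≤ A * (∫⁻ x, G x ∂μ) ^ s⁻¹ :=
      calc ∫⁻ x, G x ∂μ = ∫⁻ x, G x ^ r⁻¹ * G x ^ s⁻¹ ∂μ := by
            refine lintegral_congr fun x ↦ ?_
            rw [← rpow_add_of_nonneg _ _ hrs.inv_nonneg hrs.symm.inv_nonneg,
              hrs.inv_add_inv_eq_one, rpow_one]
        _ ≤ ∫⁻ x, F x * G x ^ s⁻¹ ∂μ :=
            lintegral_mono fun x ↦ mul_le_mul_left ((rpow_inv_le_iff hrs.pos).2 (hGF x)) _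
        _ ≤ A * eLpNorm' (fun x ↦ G x ^ s⁻¹) s μ := bound _ (hG.pow_const _)
        _ = A * (∫⁻ x, G x ∂μ) ^ s⁻¹ := by
            simp [eLpNorm'_eq_lintegral_enorm, rpow_inv_rpow hrs.symm.ne_zero]
    rw [← rpow_inv_le_iff hrs.pos, ← hrs.symm.one_sub_inv, sub_eq_add_neg,
      ENNReal.rpow_add _ _ h₀ hfin, rpow_one, rpow_neg, ← div_eq_mul_inv]
    exact ENNReal.div_le_of_le_mul split_le
  rw [eLpNorm'_eq_lintegral_enorm, one_div, rpow_inv_le_iff hrs.pos]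
  refine le_of_forall_lt fun L hL ↦ ?_
  rw [lintegral_eq_nnreal] at hL
  simp only [lt_iSup_iff] at hL
  obtain ⟨φ, hφF, hLφ⟩ := hL
  rw [← SimpleFunc.lintegral_eq_lintegral] at hLφ
  obtain ⟨ψ, hψφ, hψ, hLψ⟩ := SimpleFunc.exists_lt_lintegral_simpleFunc_of_lt_lintegral hLφ
  refine hLψ.trans_le (subfunction_le (by fun_prop) (fun x ↦ ?_) hψ.ne)
  exact (coe_le_coe.2 (hψφ x)).trans (hφF x)

end LpNorms

section Averages

variable {X : Type*} [MeasurableSpace X] {μ : Measure X}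

lemma laverage_rpow_le_rpow_laverage [IsFiniteMeasure μ] {r : ℝ} (hr₀ : 0 < r) (hr₁ : r ≤ 1)
    {f : X → ℝ≥0∞} (hf : AEMeasurable f μ) :
    ⨍⁻ x, f x ^ r ∂μ ≤ (⨍⁻ x, f x ∂μ) ^ r := by
  rcases eq_zero_or_neZero μ with rfl | _
  · simp
  have norm_le := eLpNorm'_le_eLpNorm'_of_exponent_le hr₀ hr₁ ((μ Set.univ)⁻¹ • μ)
    (hf.smul_measure _).aestronglyMeasurable
  simpa [laverage, eLpNorm', rpow_inv_le_iff hr₀] using norm_le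

lemma setLAverage_le_eLpNorm'_div {p : ℝ} (hp : 1 ≤ p) {s : Set X} (hs : μ s ≠ ∞)
    {f : X → ℝ≥0∞} (hf : AEMeasurable f μ) :
    ⨍⁻ x in s, f x ∂μ ≤ eLpNorm' f p μ / μ s ^ (1 / p) := by
  have hp₀ : 0 < p := zero_lt_one.trans_le hp
  have : IsFiniteMeasure (μ.restrict s) := isFiniteMeasure_restrict.2 hs
  calc ⨍⁻ x in s, f x ∂μ
      = ⨍⁻ x in s, (f x ^ p) ^ (1 / p) ∂μ := by
        simp_rw [one_div, rpow_rpow_inv hp₀.ne']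
    _ ≤ (⨍⁻ x in s, f x ^ p ∂μ) ^ (1 / p) :=
        laverage_rpow_le_rpow_laverage (one_div_pos.2 hp₀) ((div_le_one hp₀).2 hp)
          (hf.restrict.pow_const p)
    _ = (∫⁻ x in s, f x ^ p ∂μ) ^ (1 / p) / μ s ^ (1 / p) := by
        rw [setLAverage_eq, div_rpow_of_nonneg _ _ (one_div_nonneg.2 hp₀.le)]
    _ ≤ eLpNorm' f p μ / μ s ^ (1 / p) := by
        rw [eLpNorm'_eq_lintegral_enorm]
        gcongr ?_ ^ _ / _
        exact setLIntegral_le_lintegral _ _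

lemma rpow_setLAverage_rpow {s : ℝ} (hs : 0 ≤ s) (f : X → ℝ≥0∞) (S : Set X) :
    (⨍⁻ x in S, f x ^ s ∂μ) ^ (1 / s) = eLpNorm' f s (μ.restrict S) * (μ S)⁻¹ ^ (1 / s) := by
  rw [setLAverage_eq, div_eq_mul_inv, mul_rpow_of_nonneg _ _ (by positivity)]
  rfl

lemma eLpNorm'_indicator {s : ℝ} (hs : 0 < s) {S : Set X} (hS : MeasurableSet S) (f : X → ℝ≥0∞) :
    eLpNorm' (S.indicator f) s μ = eLpNorm' f s (μ.restrict S) := by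
  simp_rw [eLpNorm', enorm_eq_self, ← lintegral_indicator hS]
  congr! 3 with x
  by_cases hx : x ∈ S <;> simp [hx, hs]

end Averages

section BallAverages

variable {X : Type*} [PseudoMetricSpace X] [MeasurableSpace X] {μ : Measure X} {f : X → ℝ≥0∞}

variable (μ) in
/-- The centred Hardy–Littlewood maximal function of a nonnegative function, with the supremum
restricted to dyadic radii: it is comparable to the supremum over all radii, and a countable
supremum of measurable functions. -/
noncomputable def maximalFunction (f : X → ℝ≥0∞) (x : X) : ℝ≥0∞ :=
  ⨆ k : ℤ, ⨍⁻ y in closedBall x (2 ^ k), f y ∂μ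

lemma setLAverage_le_maximalFunction (f : X → ℝ≥0∞) (x : X) (k : ℤ) :
    ⨍⁻ y in closedBall x (2 ^ k), f y ∂μ ≤ maximalFunction μ f x :=
  le_iSup (fun k : ℤ ↦ ⨍⁻ y in closedBall x (2 ^ k), f y ∂μ) k

lemma maximalFunction_le_maximalFunction_indicator_add [ProperSpace X]
    [IsFiniteMeasureOnCompacts μ] [μ.IsOpenPosMeasure] (f : X → ℝ≥0∞) (t : ℝ≥0∞) (x : X) :
    maximalFunction μ f x ≤ maximalFunction μ ({x | t < f x}.indicator f) x + t := by
  refine iSup_le fun k ↦ ?_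
  have split : ∀ y, f y ≤ {x | t < f x}.indicator f y + t := fun y ↦ by
    by_cases hy : t < f y
    · simp [hy]
    · simpa [hy] using not_lt.1 hy
  calc ⨍⁻ y in closedBall x (2 ^ k), f y ∂μ
      ≤ ⨍⁻ y in closedBall x (2 ^ k), ({x | t < f x}.indicator f y + t) ∂μ :=
        setLAverage_mono_ae _ (.of_forall split)
    _ = ⨍⁻ y in closedBall x (2 ^ k), {x | t < f x}.indicator f y ∂μ +
          ⨍⁻ _ in closedBall x (2 ^ k), t ∂μ := lintegral_add_right _ measurable_const
    _ = ⨍⁻ y in closedBall x (2 ^ k), {x | t < f x}.indicator f y ∂μ + t := by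
        rw [setLAverage_const (measure_closedBall_pos μ x (by positivity)).ne'
          measure_closedBall_lt_top.ne]
    _ ≤ maximalFunction μ ({x | t < f x}.indicator f) x + t :=
        add_le_add_left (setLAverage_le_maximalFunction _ x k) t

variable (μ) in
/-- The maximal function of the local `L^s` averages, `(M (f ^ s)) ^ (1 / s)`; it is bounded on
`L^q` for every `q > s`. -/
noncomputable def powerMaximalFunction (s : ℝ) (f : X → ℝ≥0∞) (x : X) : ℝ≥0∞ :=
  maximalFunction μ (fun y ↦ f y ^ s) x ^ (1 / s)

lemma setLAverage_rpow_le_powerMaximalFunction {s : ℝ} (hs : 0 ≤ s) (f : X → ℝ≥0∞) (x : X)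
    (k : ℤ) :
    (⨍⁻ y in closedBall x (2 ^ k), f y ^ s ∂μ) ^ (1 / s) ≤ powerMaximalFunction μ s f x :=
  rpow_le_rpow (setLAverage_le_maximalFunction _ x k) (by positivity)

lemma powerMaximalFunction_one [ProperSpace X] [IsFiniteMeasureOnCompacts μ]
    [μ.IsOpenPosMeasure] (s : ℝ) : powerMaximalFunction μ s 1 = 1 := by
  ext x
  have average_one (k : ℤ) : ⨍⁻ _ in closedBall x (2 ^ k), (1 : ℝ≥0∞) ∂μ = 1 :=
    setLAverage_const (measure_closedBall_pos μ x (by positivity)).ne'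
      measure_closedBall_lt_top.ne 1
  simp [powerMaximalFunction, maximalFunction, average_one]

variable [OpensMeasurableSpace X]

lemma setLIntegral_closedBall_eq (x : X) (R : ℝ) :
    ∫⁻ y in closedBall x R, f y ∂μ =
      ∫⁻ y, {z : X × X | dist z.2 z.1 ≤ R}.indicator (fun z ↦ f z.2) (x, y) ∂μ := by
  rw [← lintegral_indicator isClosed_closedBall.measurableSet]
  rfl

variable [SecondCountableTopology X]

lemma measurable_indicator_dist_le (hf : Measurable f) (R : ℝ) :
    Measurable ({z : X × X | dist z.2 z.1 ≤ R}.indicator fun z ↦ f z.2) :=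
  (hf.comp measurable_snd).indicator (measurableSet_le (by fun_prop) (by fun_prop))

lemma measurable_setLIntegral_closedBall [SFinite μ] (hf : Measurable f) (R : ℝ) :
    Measurable fun x ↦ ∫⁻ y in closedBall x R, f y ∂μ := by
  simp_rw [setLIntegral_closedBall_eq]
  exact (measurable_indicator_dist_le hf R).lintegral_prod_right'

lemma lintegral_setLIntegral_closedBall [SFinite μ] (hf : Measurable f) (R : ℝ) :
    ∫⁻ z, ∫⁻ x in closedBall z R, f x ∂μ ∂μ = ∫⁻ x, f x * μ (closedBall x R) ∂μ := by
  have slice (x : X) :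
      ∫⁻ z, {z : X × X | dist z.2 z.1 ≤ R}.indicator (fun z ↦ f z.2) (z, x) ∂μ =
        f x * μ (closedBall x R) := by
    rw [← setLIntegral_const, ← lintegral_indicator isClosed_closedBall.measurableSet]
    simp only [Set.indicator, Set.mem_ofPred_eq, mem_closedBall, dist_comm]
  simp_rw [setLIntegral_closedBall_eq, ← slice]
  exact lintegral_lintegral_swap (measurable_indicator_dist_le hf R).aemeasurable

end BallAverages

section MaximalFunction

variable {E : Type*} [NormedAddCommGroup E] [NormedSpace ℝ E] [FiniteDimensional ℝ E]
  [MeasurableSpace E] [BorelSpace E] {μ : Measure E} [μ.IsAddHaarMeasure] {f : E → ℝ≥0∞}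

lemma measure_closedBall_two_mul (x : E) {R : ℝ} (hR : 0 ≤ R) :
    μ (closedBall x (2 * R)) = 2 ^ finrank ℝ E * μ (closedBall x R) := by
  rw [Measure.addHaar_closedBall_mul μ x zero_le_two hR, μ.addHaar_closedBall_center x,
    ofReal_pow zero_le_two, ofReal_ofNat]

lemma measure_closedBall_two_zpow (x : E) (k : ℤ) :
    μ (closedBall x (2 ^ k)) = 2 ^ (finrank ℝ E * k : ℝ) * μ (closedBall 0 1) := by
  rw [Measure.addHaar_closedBall' μ x (by positivity), ofReal_pow (by positivity),
    ← Real.rpow_intCast, ← ofReal_rpow_of_pos two_pos, ofReal_ofNat, mul_comm (finrank ℝ E : ℝ),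
    rpow_mul_natCast]

lemma measurable_setLAverage_closedBall (hf : Measurable f) (R : ℝ) :
    Measurable fun x ↦ ⨍⁻ y in closedBall x R, f y ∂μ := by
  simp_rw [setLAverage_eq, μ.addHaar_closedBall_center]
  exact (measurable_setLIntegral_closedBall hf R).div_const _

lemma lintegral_setLAverage_closedBall (hf : Measurable f) {R : ℝ} (hR : 0 < R) :
    ∫⁻ z, ⨍⁻ x in closedBall z R, f x ∂μ ∂μ = ∫⁻ x, f x ∂μ := by
  simp_rw [setLAverage_eq, μ.addHaar_closedBall_center, div_eq_mul_inv]
  rw [lintegral_mul_const _ (measurable_setLIntegral_closedBall hf R),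
    lintegral_setLIntegral_closedBall hf]
  simp_rw [μ.addHaar_closedBall_center]
  rw [lintegral_mul_const _ hf, mul_assoc, ENNReal.mul_inv_cancel
    (measure_closedBall_pos μ 0 hR).ne' measure_closedBall_lt_top.ne, mul_one]

lemma measurable_maximalFunction (hf : Measurable f) : Measurable (maximalFunction μ f) :=
  .iSup fun _ ↦ measurable_setLAverage_closedBall hf _

lemma mul_measure_le_lintegral_of_forall_closedBall {t : ℝ≥0∞} {S : Set E} {R : E → ℝ} {M : ℝ}
    (hR : ∀ x ∈ S, 0 < R x) (hRM : ∀ x ∈ S, R x ≤ M)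
    (h : ∀ x ∈ S, t * μ (closedBall x (R x)) ≤ ∫⁻ y in closedBall x (R x), f y ∂μ) :
    t * μ S ≤ 5 ^ finrank ℝ E * ∫⁻ y, f y ∂μ := by
  obtain ⟨u, huS, disjoint, covering⟩ :=
    Vitali.exists_disjoint_subfamily_covering_enlargement_closedBall S (fun x ↦ x) R M hRM
      5 (by norm_num)
  have countable : u.Countable := disjoint.countable_of_nonempty_interior fun x hx ↦
    ⟨x, ball_subset_interior_closedBall (mem_ball_self (hR x (huS hx)))⟩
  have cover : S ⊆ ⋃ x ∈ u, closedBall x (5 * R x) := fun x hx ↦ by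
    obtain ⟨b, hb, hsub⟩ := covering x hx
    exact Set.mem_biUnion hb (hsub (mem_closedBall_self (hR x hx).le))
  have enlarge (x : u) : t * μ (closedBall (x : E) (5 * R x)) ≤
      5 ^ finrank ℝ E * ∫⁻ y in closedBall (x : E) (R x), f y ∂μ := by
    rw [Measure.addHaar_closedBall_mul μ _ (by norm_num) (hR x (huS x.2)).le,
      ← μ.addHaar_closedBall_center x, ofReal_pow (by norm_num), ofReal_ofNat, mul_left_comm]
    exact mul_le_mul_right (h x (huS x.2)) _
  have : Countable u := countable.to_subtype
  calc t * μ S ≤ t * ∑' x : u, μ (closedBall (x : E) (5 * R x)) :=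
        mul_le_mul_right ((measure_mono cover).trans (measure_biUnion_le _ countable _)) _
    _ ≤ 5 ^ finrank ℝ E * ∑' x : u, ∫⁻ y in closedBall (x : E) (R x), f y ∂μ := by
        simp_rw [← ENNReal.tsum_mul_left]
        exact ENNReal.tsum_le_tsum enlarge
    _ = 5 ^ finrank ℝ E * ∫⁻ y in ⋃ x ∈ u, closedBall x (R x), f y ∂μ := by
        rw [lintegral_biUnion countable (fun _ _ ↦ isClosed_closedBall.measurableSet) disjoint]
    _ ≤ 5 ^ finrank ℝ E * ∫⁻ y, f y ∂μ := mul_le_mul_right (setLIntegral_le_lintegral _ _) _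

theorem mul_measure_lt_maximalFunction_le (f : E → ℝ≥0∞) (t : ℝ≥0∞) :
    t * μ {x | t < maximalFunction μ f x} ≤ 5 ^ finrank ℝ E * ∫⁻ y, f y ∂μ := by
  set S : ℕ → Set E := fun N ↦ {x | ∃ k : ℤ, k ≤ N ∧ t < ⨍⁻ y in closedBall x (2 ^ k), f y ∂μ}
  have exhaust : {x | t < maximalFunction μ f x} = ⋃ N, S N := by
    ext x
    simp only [maximalFunction, Set.mem_ofPred_eq, lt_iSup_iff, Set.mem_iUnion, S]
    exact ⟨fun ⟨k, hk⟩ ↦ ⟨k.toNat, k, k.self_le_toNat, hk⟩, fun ⟨_, k, _, hk⟩ ↦ ⟨k, hk⟩⟩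
  have monotone : Monotone S := fun N N' hN x ⟨k, hk, hx⟩ ↦
    ⟨k, hk.trans (by exact_mod_cast hN), hx⟩
  rw [exhaust, monotone.measure_iUnion, ENNReal.mul_iSup]
  refine iSup_le fun N ↦ ?_
  choose! k hkN hk using fun x (hx : x ∈ S N) ↦ hx
  refine mul_measure_le_lintegral_of_forall_closedBall (R := fun x ↦ 2 ^ k x) (M := 2 ^ (N : ℤ))
    (fun x _ ↦ by positivity)
    (fun x hx ↦ zpow_le_zpow_right₀ one_le_two (hkN x hx)) fun x hx ↦ ?_
  rw [mul_comm, ← measure_mul_setLAverage f measure_closedBall_lt_top.ne]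
  exact mul_le_mul_right (hk x hx).le _

theorem mul_measure_lt_maximalFunction_le_setLIntegral (hf : Measurable f) (t : ℝ≥0∞) :
    t * μ {x | t < maximalFunction μ f x} ≤
      2 * 5 ^ finrank ℝ E * ∫⁻ x in {x | t < 2 * f x}, f x ∂μ := by
  have set_eq : {x | t < 2 * f x} = {x | t / 2 < f x} := by
    ext x
    simp [ENNReal.div_lt_iff, mul_comm]
  have subset : {x | t < maximalFunction μ f x} ⊆
      {x | t / 2 < maximalFunction μ ({x | t / 2 < f x}.indicator f) x} := fun x hx ↦ by
    have lt_add := hx.trans_le (maximalFunction_le_maximalFunction_indicator_add f (t / 2) x)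
    nth_rw 1 [← ENNReal.add_halves t] at lt_add
    exact lt_of_add_lt_add_right lt_add
  calc t * μ {x | t < maximalFunction μ f x}
      = 2 * (t / 2 * μ {x | t < maximalFunction μ f x}) := by
        rw [← mul_assoc, ENNReal.mul_div_cancel two_ne_zero ofNat_ne_top]
    _ ≤ 2 * (t / 2 * μ {x | t / 2 < maximalFunction μ ({x | t / 2 < f x}.indicator f) x}) := by
        gcongr
    _ ≤ 2 * (5 ^ finrank ℝ E * ∫⁻ x, {x | t / 2 < f x}.indicator f x ∂μ) :=
        mul_le_mul_right (mul_measure_lt_maximalFunction_le _ _) _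
    _ = 2 * 5 ^ finrank ℝ E * ∫⁻ x in {x | t < 2 * f x}, f x ∂μ := by
        rw [lintegral_indicator (measurableSet_lt measurable_const hf), set_eq, mul_assoc]

variable (μ) in
theorem exists_eLpNorm'_maximalFunction_le {p : ℝ} (hp : 1 < p) :
    ∃ C : ℝ≥0, ∀ f : E → ℝ≥0∞, Measurable f →
      eLpNorm' (maximalFunction μ f) p μ ≤ C * eLpNorm' f p μ := by
  have : 0 < p - 1 := sub_pos.2 hp
  set C := 2 * 5 ^ finrank ℝ E * ENNReal.ofReal p / ENNReal.ofReal (p - 1) * 2 ^ (p - 1)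
  have C_ne_top : C ^ (1 / p) ≠ ∞ := by finiteness
  refine ⟨(C ^ (1 / p)).toNNReal, fun f hf ↦ ?_⟩
  rw [coe_toNNReal C_ne_top]
  calc eLpNorm' (maximalFunction μ f) p μ ≤ (C * ∫⁻ x, f x ^ p ∂μ) ^ (1 / p) := by
        refine rpow_le_rpow ?_ (by positivity)
        exact lintegral_rpow_le_of_mul_measure_lt_le hp hf (measurable_maximalFunction hf)
          fun t _ ↦ mul_measure_lt_maximalFunction_le_setLIntegral hf _
    _ = C ^ (1 / p) * eLpNorm' f p μ := mul_rpow_of_nonneg _ _ (by positivity)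

lemma measurable_powerMaximalFunction (s : ℝ) (hf : Measurable f) :
    Measurable (powerMaximalFunction μ s f) :=
  (measurable_maximalFunction (hf.pow_const s)).pow_const _

variable (μ) in
theorem exists_eLpNorm'_powerMaximalFunction_le {s q : ℝ} (hs : 0 < s) (hsq : s < q) :
    ∃ C : ℝ≥0, ∀ f : E → ℝ≥0∞, Measurable f →
      eLpNorm' (powerMaximalFunction μ s f) q μ ≤ C * eLpNorm' f q μ := by
  obtain ⟨C, hC⟩ := exists_eLpNorm'_maximalFunction_le μ
    (show 1 < q * (1 / s) by rwa [mul_one_div, one_lt_div hs])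
  refine ⟨C ^ (1 / s), fun f hf ↦ ?_⟩
  calc eLpNorm' (powerMaximalFunction μ s f) q μ
      = eLpNorm' (maximalFunction μ fun y ↦ f y ^ s) (q * (1 / s)) μ ^ (1 / s) :=
        eLpNorm'_enorm_rpow (maximalFunction μ fun y ↦ f y ^ s) q _ (one_div_pos.2 hs)
    _ ≤ (C * eLpNorm' (fun y ↦ f y ^ s) (q * (1 / s)) μ) ^ (1 / s) :=
        rpow_le_rpow (hC _ (hf.pow_const s)) (by positivity)
    _ = (C * eLpNorm' f q μ ^ s) ^ (1 / s) := by
        congr 2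
        simpa [hs.ne'] using eLpNorm'_enorm_rpow f (q * (1 / s)) s hs
    _ = (C ^ (1 / s) : ℝ≥0) * eLpNorm' f q μ := by
        rw [mul_rpow_of_nonneg _ _ (by positivity), coe_rpow_of_nonneg _ (by positivity),
          ← ENNReal.rpow_mul, mul_one_div_cancel hs.ne', rpow_one]

end MaximalFunction

section Hedberg

variable {E : Type*} [NormedAddCommGroup E] [NormedSpace ℝ E] [FiniteDimensional ℝ E]
  [MeasurableSpace E] [BorelSpace E] {μ : Measure E} [μ.IsAddHaarMeasure] {f : E → ℝ≥0∞}
  {α p q r s t : ℝ}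

variable (μ) in
/-- The product `‖f‖_p ^ (αp/d) * (M f) ^ (1 - αp/d)`, which in Hedberg's inequality bounds the
fractional integral of order `α` of `f` pointwise. -/
noncomputable def hedbergMajorant (α p : ℝ) (f : E → ℝ≥0∞) (x : E) : ℝ≥0∞ :=
  eLpNorm' f p μ ^ (α * p / finrank ℝ E) * maximalFunction μ f x ^ (1 - α * p / finrank ℝ E)

lemma measurable_hedbergMajorant (hf : Measurable f) : Measurable (hedbergMajorant μ α p f) :=
  ((measurable_maximalFunction hf).pow_const _).const_mul _

lemma two_rpow_mul_setLAverage_le (hp : 1 ≤ p) (hf : Measurable f) (x : E) (k : ℤ) :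
    2 ^ (α * k) * ⨍⁻ y in closedBall x (2 ^ k), f y ∂μ ≤
      (μ (closedBall 0 1) ^ (1 / p))⁻¹ * eLpNorm' f p μ * 2 ^ (-(finrank ℝ E / p - α) * k) := by
  have hp' : 0 ≤ 1 / p := by positivity
  calc 2 ^ (α * k) * ⨍⁻ y in closedBall x (2 ^ k), f y ∂μ
      ≤ 2 ^ (α * k) * (eLpNorm' f p μ / μ (closedBall x (2 ^ k)) ^ (1 / p)) :=
        mul_le_mul_right
          (setLAverage_le_eLpNorm'_div hp measure_closedBall_lt_top.ne hf.aemeasurable) _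
    _ = (μ (closedBall 0 1) ^ (1 / p))⁻¹ * eLpNorm' f p μ *
          (2 ^ (α * k) * 2 ^ (-(finrank ℝ E * k * (1 / p)))) := by
        rw [measure_closedBall_two_zpow, mul_rpow_of_nonneg _ _ hp', ← ENNReal.rpow_mul,
          div_eq_mul_inv, ENNReal.mul_inv (.inl (by simp)) (.inl (by simp)), rpow_neg]
        ring
    _ = _ := by
        rw [← two_rpow_add]
        ring_nf

variable (μ) in
theorem exists_tsum_setLAverage_rpow_le_hedbergMajorant (hα : 0 < α) (hp : 1 ≤ p)
    (hpα : p < finrank ℝ E / α) (ht : 0 < t) :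
    ∃ K : ℝ≥0, ∀ f : E → ℝ≥0∞, Measurable f → ∀ x,
      ∑' k : ℤ, (2 ^ (α * k) * ⨍⁻ y in closedBall x (2 ^ k), f y ∂μ) ^ t ≤
        K * hedbergMajorant μ α p f x ^ t := by
  have hp₀ : 0 < p := zero_lt_one.trans_le hp
  have hd : 0 < (finrank ℝ E : ℝ) := (mul_pos hp₀ hα).trans ((lt_div_iff₀ hα).1 hpα)
  have hβ : 0 < finrank ℝ E / p - α :=
    sub_pos.2 ((lt_div_iff₀' hp₀).2 ((lt_div_iff₀ hα).1 hpα))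
  have ha : α / (finrank ℝ E / p) = α * p / finrank ℝ E := div_div_eq_mul_div ..
  have one_sub_a : (finrank ℝ E / p - α) / (finrank ℝ E / p) = 1 - α * p / finrank ℝ E := by
    field_simp
  obtain ⟨K, hK⟩ := exists_tsum_min_two_rpow_rpow_le hα hβ ht
  rw [add_sub_cancel, ha, one_sub_a] at hK
  set a := α * p / finrank ℝ E
  set W := (μ (closedBall (0 : E) 1) ^ (1 / p))⁻¹
  have W_ne_top : W ≠ ∞ := by
    simp [W, (measure_closedBall_pos μ (0 : E) one_pos).ne', measure_closedBall_lt_top.ne]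
  refine ⟨K * ((W ^ a) ^ t).toNNReal, fun f hf x ↦ ?_⟩
  set N := eLpNorm' f p μ
  set A := maximalFunction μ f x
  calc ∑' k : ℤ, (2 ^ (α * k) * ⨍⁻ y in closedBall x (2 ^ k), f y ∂μ) ^ t
      ≤ ∑' k : ℤ, min (A * 2 ^ (α * k)) (W * N * 2 ^ (-(finrank ℝ E / p - α) * k)) ^ t := by
        refine ENNReal.tsum_le_tsum fun k ↦ rpow_le_rpow (le_min ?_ ?_) ht.le
        · rw [mul_comm]
          exact mul_le_mul_left (setLAverage_le_maximalFunction f x k) _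
        · exact two_rpow_mul_setLAverage_le hp hf x k
    _ ≤ K * (A ^ (1 - a) * (W * N) ^ a) ^ t := hK _ _
    _ = K * (W ^ a) ^ t * (N ^ a * A ^ (1 - a)) ^ t := by
        rw [mul_rpow_of_nonneg W N (by positivity : 0 ≤ a), mul_left_comm,
          mul_rpow_of_nonneg (W ^ a) _ ht.le, ← mul_assoc, mul_comm (A ^ (1 - a))]
    _ = _ := by
        rw [coe_mul, coe_toNNReal (by finiteness)]
        rfl

lemma mem_Ioo_of_one_div_add_one_div_eq {d α p q r : ℝ} (hp : 0 < p) (hpα : p < d / α) (hq : 0 < q)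
    (hpqr : 1 / p + 1 / q = 1 / r + α / d) : r ∈ Set.Ioo 0 q := by
  have α_div_lt : α / d < 1 / p := one_div_div d α ▸ one_div_lt_one_div_of_lt hp hpα
  have one_div_q_pos : 0 < 1 / q := by positivity
  have hr : 0 < r := one_div_pos.1 (by linarith)
  exact ⟨hr, (one_div_lt_one_div hq hr).1 (by linarith)⟩

variable (μ) in
theorem exists_eLpNorm'_hedbergMajorant_mul_le (hα : 0 < α) (hp : 1 < p)
    (hpα : p < finrank ℝ E / α) (hs : 0 < s) (hsq : s < q)
    (hpqr : 1 / p + 1 / q = 1 / r + α / finrank ℝ E) :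
    ∃ C : ℝ≥0, ∀ f g : E → ℝ≥0∞, Measurable f → Measurable g →
      eLpNorm' (fun x ↦ hedbergMajorant μ α p f x * powerMaximalFunction μ s g x) r μ ≤
        C * eLpNorm' f p μ * eLpNorm' g q μ := by
  have hp₀ : 0 < p := zero_lt_one.trans hp
  have hd : 0 < (finrank ℝ E : ℝ) := (mul_pos hp₀ hα).trans ((lt_div_iff₀ hα).1 hpα)
  obtain ⟨hr, hrq⟩ := mem_Ioo_of_one_div_add_one_div_eq hp₀ hpα (hs.trans hsq) hpqr
  have one_div_p : (1 - α * p / finrank ℝ E) / p = 1 / p - α / finrank ℝ E := by field_simp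
  have ha₀ : 0 ≤ α * p / finrank ℝ E := by positivity
  have ha₁ : 0 < 1 - α * p / finrank ℝ E :=
    sub_pos.2 ((div_lt_one hd).2 (by rwa [lt_div_iff₀' hα] at hpα))
  unfold hedbergMajorant
  set a := α * p / finrank ℝ E
  have one_div_r : 1 / r = 1 / q + 1 / (p / (1 - a)) := by
    rw [one_div_div, one_div_p]
    linarith
  obtain ⟨C₁, hC₁⟩ := exists_eLpNorm'_maximalFunction_le μ hp
  obtain ⟨C₂, hC₂⟩ := exists_eLpNorm'_powerMaximalFunction_le μ hs hsq
  refine ⟨C₁ ^ (1 - a) * C₂, fun f g hf hg ↦ ?_⟩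
  set N := eLpNorm' f p μ
  set A := maximalFunction μ f
  set G := powerMaximalFunction μ s g
  have hA : Measurable fun x ↦ A x ^ (1 - a) := (measurable_maximalFunction hf).pow_const _
  have hG : Measurable G := measurable_powerMaximalFunction s hg
  calc eLpNorm' (fun x ↦ N ^ a * A x ^ (1 - a) * G x) r μ
      ≤ N ^ a * eLpNorm' (fun x ↦ G x * A x ^ (1 - a)) r μ :=
        eLpNorm'_le_mul_eLpNorm'_of_ae_le_mul (hG.mul hA).aestronglyMeasurable
          (.of_forall fun x ↦ by simp only [enorm_eq_self, mul_assoc, mul_comm (G x), le_rfl]) hr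
    _ ≤ N ^ a * (eLpNorm' G q μ * eLpNorm' (fun x ↦ A x ^ (1 - a)) (p / (1 - a)) μ) :=
        mul_le_mul_right
          (lintegral_Lp_mul_le_Lq_mul_Lr hr hrq one_div_r μ hG.aemeasurable hA.aemeasurable) _
    _ = N ^ a * (eLpNorm' G q μ * eLpNorm' A p μ ^ (1 - a)) := by
        congr 2
        simpa [ha₁.ne'] using eLpNorm'_enorm_rpow A (p / (1 - a)) (1 - a) ha₁
    _ ≤ N ^ a * (C₂ * eLpNorm' g q μ * (C₁ * N) ^ (1 - a)) := by
        gcongr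
        exacts [hC₂ g hg, hC₁ f hf]
    _ = C₁ ^ (1 - a) * C₂ * (N ^ a * N ^ (1 - a)) * eLpNorm' g q μ := by
        rw [mul_rpow_of_nonneg _ _ ha₁.le]
        ring
    _ = _ := by
        rw [← rpow_add_of_nonneg _ _ ha₀ ha₁.le, add_sub_cancel, rpow_one, coe_mul,
          coe_rpow_of_nonneg _ ha₁.le]

end Hedberg

section BilinearAverages

lemma add_smul_mem_closedBall {E : Type*} [SeminormedAddCommGroup E] [NormedSpace ℝ E]
    {x y z : E} {c R : ℝ} (hx : x ∈ closedBall z R) (hy : y ∈ closedBall 0 R) (hc : |c| ≤ 1) :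
    x + c • y ∈ closedBall z (2 * R) := by
  rw [mem_closedBall_iff_norm] at hx ⊢
  rw [mem_closedBall_zero_iff] at hy
  calc ‖x + c • y - z‖ = ‖(x - z) + c • y‖ := by rw [add_sub_right_comm]
    _ ≤ ‖x - z‖ + ‖c • y‖ := norm_add_le _ _
    _ ≤ R + 1 * R := by
        rw [norm_smul, Real.norm_eq_abs]
        gcongr
    _ = 2 * R := by ring

variable {E : Type*} [NormedAddCommGroup E] [NormedSpace ℝ E] [MeasurableSpace E] {μ : Measure E}
  {f g h : E → ℝ≥0∞} {θ r s s' : ℝ}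

variable (μ) in
/-- The mean over `‖y‖ ≤ R` of `f (x + (θ - 1) y) g (x + θ y)`: the part of the bilinear
fractional integral at scale `R`, without its weight. -/
noncomputable def bilinearAverage (θ R : ℝ) (f g : E → ℝ≥0∞) (x : E) : ℝ≥0∞ :=
  ⨍⁻ y in closedBall 0 R, f (x + (θ - 1) • y) * g (x + θ • y) ∂μ

variable [BorelSpace E] [FiniteDimensional ℝ E]

lemma measurable_bilinearAverage [SFinite μ] (θ R : ℝ) (hf : Measurable f) (hg : Measurable g) :
    Measurable (bilinearAverage μ θ R f g) :=
  Measurable.lintegral_prod_right'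
    (f := fun z : E × E ↦ f (z.1 + (θ - 1) • z.2) * g (z.1 + θ • z.2)) (by fun_prop)

variable [μ.IsAddHaarMeasure]

lemma lintegral_comp_add_smul (hf : Measurable f) (x : E) {c : ℝ} (hc : c ≠ 0) :
    ∫⁻ y, f (x + c • y) ∂μ = ENNReal.ofReal |(c ^ finrank ℝ E)⁻¹| * ∫⁻ y, f y ∂μ := by
  calc ∫⁻ y, f (x + c • y) ∂μ = ∫⁻ y, f (x + y) ∂μ.map (c • ·) :=
        (lintegral_map (f := fun y ↦ f (x + y)) (by fun_prop) (by fun_prop)).symm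
    _ = _ := by
        rw [μ.map_addHaar_smul hc, lintegral_smul_measure, lintegral_add_left_eq_self, smul_eq_mul]

lemma eLpNorm'_comp_add_smul_le (hf : Measurable f) (x : E) {c : ℝ} (hc : 1 / 2 ≤ c) (hs : 1 ≤ s) :
    eLpNorm' (fun y ↦ f (x + c • y)) s μ ≤ 2 ^ finrank ℝ E * eLpNorm' f s μ := by
  have hc₀ : 0 < c := by linarith
  have hs₀ : 0 < s := by linarith
  have jacobian_le : ENNReal.ofReal |(c ^ finrank ℝ E)⁻¹| ≤ 2 ^ finrank ℝ E := by
    rw [← ofReal_ofNat 2, ← ofReal_pow zero_le_two, abs_of_pos (by positivity), ← inv_pow]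
    gcongr
    exact inv_le_of_inv_le₀ two_pos (by linarith)
  calc eLpNorm' (fun y ↦ f (x + c • y)) s μ
      = (ENNReal.ofReal |(c ^ finrank ℝ E)⁻¹| * ∫⁻ y, f y ^ s ∂μ) ^ (1 / s) :=
        congrArg (· ^ (1 / s)) (lintegral_comp_add_smul (hf.pow_const s) x hc₀.ne')
    _ ≤ (2 ^ finrank ℝ E * ∫⁻ y, f y ^ s ∂μ) ^ (1 / s) := by gcongr
    _ = (2 ^ finrank ℝ E) ^ (1 / s) * eLpNorm' f s μ :=
        mul_rpow_of_nonneg _ _ (by positivity)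
    _ ≤ 2 ^ finrank ℝ E * eLpNorm' f s μ := by
        gcongr
        exact (rpow_le_rpow_of_exponent_le (one_le_pow₀ one_le_two)
          ((div_le_one hs₀).2 hs)).trans_eq (rpow_one _)

-- Centring `x` at the argument of `f` leaves a product of `g` and `h` in `y`, to which Hölder's
-- inequality applies; `θ ≤ 1 / 2` keeps the dilation in the argument of `h` away from `0`.
theorem lintegral_lintegral_mul_mul_le (hθ : θ ≤ 1 / 2) (hs : s.HolderConjugate s')
    (hf : Measurable f) (hg : Measurable g) (hh : Measurable h) :
    ∫⁻ x, ∫⁻ y, f (x + (θ - 1) • y) * g (x + θ • y) * h x ∂μ ∂μ ≤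
      2 ^ finrank ℝ E * ((∫⁻ x, f x ∂μ) * eLpNorm' g s μ * eLpNorm' h s' μ) := by
  have centre (y : E) : ∫⁻ x, f (x + (θ - 1) • y) * g (x + θ • y) * h x ∂μ =
      ∫⁻ x, f x * (g (x + y) * h (x + (1 - θ) • y)) ∂μ := by
    rw [← lintegral_add_right_eq_self (μ := μ) _ ((1 - θ) • y)]
    congr! 2 with x
    rw [mul_assoc, add_assoc, add_assoc, ← add_smul, ← add_smul]
    simp
  have holder (x : E) : ∫⁻ y, g (x + y) * h (x + (1 - θ) • y) ∂μ ≤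
      eLpNorm' g s μ * (2 ^ finrank ℝ E * eLpNorm' h s' μ) :=
    calc ∫⁻ y, g (x + y) * h (x + (1 - θ) • y) ∂μ
        ≤ eLpNorm' (fun y ↦ g (x + y)) s μ * eLpNorm' (fun y ↦ h (x + (1 - θ) • y)) s' μ :=
          lintegral_mul_le_Lp_mul_Lq μ hs (by fun_prop) (by fun_prop)
      _ = eLpNorm' g s μ * eLpNorm' (fun y ↦ h (x + (1 - θ) • y)) s' μ := by
          congr 1
          exact congrArg (· ^ (1 / s)) (lintegral_add_left_eq_self (fun y ↦ g y ^ s) x)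
      _ ≤ _ := mul_le_mul_right
          (eLpNorm'_comp_add_smul_le hh x (by linarith) hs.symm.lt.le) _
  calc ∫⁻ x, ∫⁻ y, f (x + (θ - 1) • y) * g (x + θ • y) * h x ∂μ ∂μ
      = ∫⁻ y, ∫⁻ x, f x * (g (x + y) * h (x + (1 - θ) • y)) ∂μ ∂μ := by
        rw [lintegral_lintegral_swap (by fun_prop)]
        simp_rw [centre]
    _ = ∫⁻ x, f x * ∫⁻ y, g (x + y) * h (x + (1 - θ) • y) ∂μ ∂μ := by
        rw [lintegral_lintegral_swap (by fun_prop)]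
        congr! 2 with x
        exact lintegral_const_mul _ (by fun_prop)
    _ ≤ ∫⁻ x, f x * (eLpNorm' g s μ * (2 ^ finrank ℝ E * eLpNorm' h s' μ)) ∂μ :=
        lintegral_mono fun x ↦ mul_le_mul_right (holder x) _
    _ = _ := by
        rw [lintegral_mul_const _ hf]
        ring

lemma setLIntegral_setLIntegral_mul_mul_le (hθ : θ ∈ Set.Icc 0 (1 / 2))
    (hs : s.HolderConjugate s') (hf : Measurable f) (hg : Measurable g) (hh : Measurable h)
    {R : ℝ} (hR : 0 ≤ R) (z : E) :
    ∫⁻ x in closedBall z R, ∫⁻ y in closedBall 0 R,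
        f (x + (θ - 1) • y) * g (x + θ • y) * h x ∂μ ∂μ ≤
      2 ^ finrank ℝ E * ((∫⁻ x in closedBall z (2 * R), f x ∂μ) *
        eLpNorm' g s (μ.restrict (closedBall z (2 * R))) *
        eLpNorm' h s' (μ.restrict (closedBall z (2 * R)))) := by
  set B := closedBall z (2 * R)
  have hB : MeasurableSet B := isClosed_closedBall.measurableSet
  have indicator_eq {u : E → ℝ≥0∞} {v : E} (hv : v ∈ B) : u v = B.indicator u v :=
    (Set.indicator_of_mem hv u).symm
  rw [← lintegral_indicator hB, ← eLpNorm'_indicator hs.pos hB,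
    ← eLpNorm'_indicator hs.symm.pos hB]
  refine le_trans ?_ (lintegral_lintegral_mul_mul_le hθ.2 hs (hf.indicator hB) (hg.indicator hB)
    (hh.indicator hB))
  refine (setLIntegral_mono' isClosed_closedBall.measurableSet fun x hx ↦
    (setLIntegral_mono' isClosed_closedBall.measurableSet fun y hy ↦ ?_).trans
      (setLIntegral_le_lintegral _ _)).trans (setLIntegral_le_lintegral _ _)
  have hθ₁ : |θ - 1| ≤ 1 := abs_le.2 ⟨by linarith [hθ.1], by linarith [hθ.2]⟩
  have hθ₂ : |θ| ≤ 1 := abs_le.2 ⟨by linarith [hθ.1], by linarith [hθ.2]⟩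
  rw [← indicator_eq (add_smul_mem_closedBall hx hy hθ₁),
    ← indicator_eq (add_smul_mem_closedBall hx hy hθ₂),
    ← indicator_eq (closedBall_subset_closedBall (by linarith) hx)]

theorem setLAverage_bilinearAverage_mul_le (hθ : θ ∈ Set.Icc 0 (1 / 2))
    (hs : s.HolderConjugate s') (hf : Measurable f) (hg : Measurable g) (hh : Measurable h)
    {R : ℝ} (hR : 0 < R) (z : E) :
    ⨍⁻ x in closedBall z R, bilinearAverage μ θ R f g x * h x ∂μ ≤
      8 ^ finrank ℝ E * ((⨍⁻ x in closedBall z (2 * R), f x ∂μ) *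
        (⨍⁻ x in closedBall z (2 * R), g x ^ s ∂μ) ^ (1 / s) *
        (⨍⁻ x in closedBall z (2 * R), h x ^ s' ∂μ) ^ (1 / s')) := by
  set V := μ (closedBall z (2 * R)) with hV
  have V_pos : V ≠ 0 := (measure_closedBall_pos μ z (by positivity)).ne'
  have V_fin : V ≠ ∞ := measure_closedBall_lt_top.ne
  have inv_V : (μ (closedBall z R))⁻¹ = 2 ^ finrank ℝ E * V⁻¹ := by
    rw [hV, measure_closedBall_two_mul z hR.le, ENNReal.mul_inv (.inl (by simp)) (.inl (by simp)),
      ← mul_assoc, ENNReal.mul_inv_cancel (by simp) (by simp), one_mul]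
  have V_split : V⁻¹ ^ (1 / s) * V⁻¹ ^ (1 / s') = V⁻¹ := by
    rw [← ENNReal.rpow_add _ _ (by simp [V_fin]) (by simp [V_pos]), one_div, one_div,
      hs.inv_add_inv_eq_one, rpow_one]
  have scale (x : E) : bilinearAverage μ θ R f g x * h x = 2 ^ finrank ℝ E * V⁻¹ *
      ∫⁻ y in closedBall 0 R, f (x + (θ - 1) • y) * g (x + θ • y) * h x ∂μ := by
    rw [bilinearAverage, setLAverage_eq, lintegral_mul_const _ (by fun_prop), div_eq_mul_inv,
      ← μ.addHaar_closedBall_center z, inv_V]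
    ring
  have inner_measurable : Measurable fun x ↦
      ∫⁻ y in closedBall 0 R, f (x + (θ - 1) • y) * g (x + θ • y) * h x ∂μ :=
    Measurable.lintegral_prod_right'
      (f := fun z : E × E ↦ f (z.1 + (θ - 1) • z.2) * g (z.1 + θ • z.2) * h z.1) (by fun_prop)
  calc ⨍⁻ x in closedBall z R, bilinearAverage μ θ R f g x * h x ∂μ
      = 2 ^ finrank ℝ E * V⁻¹ * (2 ^ finrank ℝ E * V⁻¹) * ∫⁻ x in closedBall z R,
          ∫⁻ y in closedBall 0 R, f (x + (θ - 1) • y) * g (x + θ • y) * h x ∂μ ∂μ := by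
        rw [setLAverage_eq, div_eq_mul_inv, inv_V]
        simp_rw [scale]
        rw [lintegral_const_mul _ inner_measurable]
        ring
    _ ≤ 2 ^ finrank ℝ E * V⁻¹ * (2 ^ finrank ℝ E * V⁻¹) * _ :=
        mul_le_mul_right (setLIntegral_setLIntegral_mul_mul_le hθ hs hf hg hh hR.le z) _
    _ = _ := by
        rw [rpow_setLAverage_rpow hs.nonneg, rpow_setLAverage_rpow hs.symm.nonneg, setLAverage_eq,
          div_eq_mul_inv, ← hV, show (8 : ℝ≥0∞) = 2 * 2 * 2 by norm_num, mul_pow, mul_pow]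
        nth_rw 2 [← V_split]
        ring

end BilinearAverages

section BilinearFractionalIntegral

lemma ofReal_norm_rpow_neg_le_tsum {E : Type*} [SeminormedAddCommGroup E] {β : ℝ} (hβ : 0 < β)
    (y : E) : ENNReal.ofReal (‖y‖ ^ (-β)) ≤
      4 ^ β * ∑' k : ℤ, 2 ^ (-β * k) * (closedBall (0 : E) (2 ^ k / 2)).indicator 1 y := by
  rcases (norm_nonneg y).eq_or_lt' with hy | hy
  · simp [hy, Real.zero_rpow (neg_ne_zero.2 hβ.ne')]
  obtain ⟨k, hk, hk'⟩ := exists_mem_Ioc_zpow hy one_lt_two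
  have mem_ball : y ∈ closedBall (0 : E) (2 ^ (k + 2) / 2) := by
    rw [zpow_add₀ two_ne_zero] at hk' ⊢
    simpa [mul_div_assoc, show (2 : ℝ) ^ 2 / 2 = 2 by norm_num] using hk'
  have scale_eq : (4 : ℝ≥0∞) ^ β * 2 ^ (-β * ((k + 2 : ℤ) : ℝ)) = 2 ^ (-β * k) := by
    rw [show (4 : ℝ≥0∞) = 2 ^ (2 : ℝ) by norm_num, ← ENNReal.rpow_mul, ← two_rpow_add]
    push_cast
    ring_nf
  calc ENNReal.ofReal (‖y‖ ^ (-β)) ≤ ENNReal.ofReal ((2 ^ k) ^ (-β)) :=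
        ofReal_le_ofReal (Real.rpow_le_rpow_of_nonpos (by positivity) hk.le (by linarith))
    _ = 4 ^ β * (2 ^ (-β * ((k + 2 : ℤ) : ℝ)) *
          (closedBall (0 : E) (2 ^ (k + 2) / 2)).indicator 1 y) := by
        rw [Set.indicator_of_mem mem_ball, Pi.one_apply, mul_one, scale_eq, ← Real.rpow_intCast,
          ← Real.rpow_mul zero_le_two, ← ofReal_rpow_of_pos two_pos, ofReal_ofNat, mul_comm]
    _ ≤ _ := mul_le_mul_right (ENNReal.le_tsum (k + 2)) _

variable {E : Type*} [NormedAddCommGroup E] [NormedSpace ℝ E] [MeasurableSpace E] {μ : Measure E}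
  {f g h : E → ℝ≥0∞} {α θ p q r s s' : ℝ}

variable (μ) in
/-- The bilinear fractional integral of order `α` on a finite-dimensional space, with respect to a
Haar measure `μ` and an arbitrary norm. -/
noncomputable def bilinearFractionalIntegral (α θ : ℝ) (f g : E → ℝ≥0∞) (x : E) : ℝ≥0∞ :=
  ∫⁻ y, f (x + (θ - 1) • y) * g (x + θ • y) * ENNReal.ofReal (‖y‖ ^ (α - finrank ℝ E)) ∂μ

variable (μ) in
/-- The dyadic model of the bilinear fractional integral: the sum over all scales `2 ^ k` of the
bilinear averages at radius `2 ^ k / 2`, weighted by `2 ^ (α k)`. The halved radius makes the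
averages at scale `2 ^ k` depend locally on balls of radius `2 ^ k`. -/
noncomputable def dyadicBilinearIntegral (α θ : ℝ) (f g : E → ℝ≥0∞) (x : E) : ℝ≥0∞ :=
  ∑' k : ℤ, 2 ^ (α * k) * bilinearAverage μ θ (2 ^ k / 2) f g x

variable [BorelSpace E] [FiniteDimensional ℝ E]

lemma measurable_dyadicBilinearIntegral [SFinite μ] (α θ : ℝ) (hf : Measurable f)
    (hg : Measurable g) : Measurable (dyadicBilinearIntegral μ α θ f g) :=
  .tsum fun _ ↦ (measurable_bilinearAverage θ _ hf hg).const_mul _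

variable [μ.IsAddHaarMeasure]

variable (μ) in
lemma bilinearFractionalIntegral_swap (α θ : ℝ) (f g : E → ℝ≥0∞) :
    bilinearFractionalIntegral μ α θ f g = bilinearFractionalIntegral μ α (1 - θ) g f := by
  ext x
  rw [bilinearFractionalIntegral, bilinearFractionalIntegral, ← lintegral_neg_eq_self]
  congr! 2 with y
  rw [norm_neg, smul_neg, smul_neg, ← neg_smul, ← neg_smul, neg_sub, sub_sub_cancel_left,
    mul_comm (f _)]

theorem bilinearFractionalIntegral_le_mul_dyadicBilinearIntegral (hα : α < finrank ℝ E) (θ : ℝ)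
    (hf : Measurable f) (hg : Measurable g) (x : E) :
    bilinearFractionalIntegral μ α θ f g x ≤ 4 ^ (finrank ℝ E - α) * μ (closedBall 0 1) *
      dyadicBilinearIntegral μ α θ f g x := by
  obtain ⟨β, rfl⟩ : ∃ β, α = finrank ℝ E - β := ⟨finrank ℝ E - α, (_root_.sub_sub_cancel ..).symm⟩
  have hβ : 0 < β := sub_lt_self_iff _ |>.1 hα
  rw [_root_.sub_sub_cancel]
  set F : E → ℝ≥0∞ := fun y ↦ f (x + (θ - 1) • y) * g (x + θ • y)
  have hFm : Measurable F := by fun_prop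
  have indicator_measurable (k : ℤ) :
      Measurable ((closedBall (0 : E) (2 ^ k / 2)).indicator F) :=
    hFm.indicator isClosed_closedBall.measurableSet
  have scale_le (k : ℤ) : 2 ^ (-β * k) * ∫⁻ y in closedBall 0 (2 ^ k / 2), F y ∂μ ≤
      μ (closedBall 0 1) * (2 ^ ((finrank ℝ E - β) * k) * bilinearAverage μ θ (2 ^ k / 2) f g x) :=
    calc 2 ^ (-β * k) * ∫⁻ y in closedBall 0 (2 ^ k / 2), F y ∂μ
        = 2 ^ (-β * k) *
            (μ (closedBall 0 (2 ^ k / 2)) * bilinearAverage μ θ (2 ^ k / 2) f g x) := by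
          rw [bilinearAverage, measure_mul_setLAverage _ measure_closedBall_lt_top.ne]
      _ ≤ 2 ^ (-β * k) * (μ (closedBall 0 (2 ^ k)) * bilinearAverage μ θ (2 ^ k / 2) f g x) := by
          gcongr
          exact half_le_self (by positivity)
      _ = μ (closedBall 0 1) *
            (2 ^ (-β * k) * 2 ^ (finrank ℝ E * k : ℝ) * bilinearAverage μ θ (2 ^ k / 2) f g x) := by
          rw [measure_closedBall_two_zpow]
          ring
      _ = _ := by
          rw [← two_rpow_add, ← add_mul, neg_add_eq_sub]
  calc bilinearFractionalIntegral μ (finrank ℝ E - β) θ f g x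
      ≤ ∫⁻ y, 4 ^ β * ∑' k : ℤ, 2 ^ (-β * k) *
          (closedBall (0 : E) (2 ^ k / 2)).indicator F y ∂μ := by
        refine lintegral_mono fun y ↦ ?_
        rw [sub_sub_cancel_left]
        refine (mul_le_mul_right (ofReal_norm_rpow_neg_le_tsum hβ y) (F y)).trans_eq ?_
        rw [mul_left_comm, ← ENNReal.tsum_mul_left]
        congr! 3 with k
        by_cases hy : y ∈ closedBall (0 : E) (2 ^ k / 2) <;> simp [hy, mul_comm]
    _ = 4 ^ β * ∑' k : ℤ, 2 ^ (-β * k) * ∫⁻ y in closedBall 0 (2 ^ k / 2), F y ∂μ := by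
        rw [lintegral_const_mul _ (by fun_prop), lintegral_tsum (by fun_prop)]
        congr! 3 with k
        rw [lintegral_const_mul _ (indicator_measurable k),
          lintegral_indicator isClosed_closedBall.measurableSet]
    _ ≤ 4 ^ β * ∑' k : ℤ, μ (closedBall 0 1) *
          (2 ^ ((finrank ℝ E - β) * k) * bilinearAverage μ θ (2 ^ k / 2) f g x) := by
        exact mul_le_mul_right (ENNReal.tsum_le_tsum scale_le) _
    _ = _ := by rw [ENNReal.tsum_mul_left, mul_assoc, dyadicBilinearIntegral]

lemma setLAverage_bilinearAverage_mul_le_powerMaximalFunction (hθ : θ ∈ Set.Icc 0 (1 / 2))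
    (hs : s.HolderConjugate s') (hf : Measurable f) (hg : Measurable g) (hh : Measurable h)
    (k : ℤ) (z : E) :
    ⨍⁻ x in closedBall z (2 ^ k / 2), bilinearAverage μ θ (2 ^ k / 2) f g x * h x ∂μ ≤
      8 ^ finrank ℝ E * ((⨍⁻ x in closedBall z (2 ^ k), f x ∂μ) * powerMaximalFunction μ s g z *
        powerMaximalFunction μ s' h z) := by
  have local_bound := setLAverage_bilinearAverage_mul_le (μ := μ) hθ hs hf hg hh
    (show (0 : ℝ) < 2 ^ k / 2 by positivity) z
  rw [mul_div_cancel₀ _ two_ne_zero] at local_bound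
  refine local_bound.trans (mul_le_mul_right (mul_le_mul' (mul_le_mul_right ?_ _) ?_) _)
  · exact setLAverage_rpow_le_powerMaximalFunction hs.nonneg g z k
  · exact setLAverage_rpow_le_powerMaximalFunction hs.symm.nonneg h z k

lemma lintegral_bilinearAverage_mul_le (hθ : θ ∈ Set.Icc 0 (1 / 2))
    (hs : s.HolderConjugate s') (hf : Measurable f) (hg : Measurable g) (hh : Measurable h)
    (k : ℤ) :
    ∫⁻ x, bilinearAverage μ θ (2 ^ k / 2) f g x * h x ∂μ ≤
      ∫⁻ z, 8 ^ finrank ℝ E * ((⨍⁻ x in closedBall z (2 ^ k), f x ∂μ) *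
        powerMaximalFunction μ s g z * powerMaximalFunction μ s' h z) ∂μ := by
  have hTh : Measurable fun x ↦ bilinearAverage μ θ (2 ^ k / 2) f g x * h x :=
    (measurable_bilinearAverage θ _ hf hg).mul hh
  rw [← lintegral_setLAverage_closedBall hTh (show (0 : ℝ) < 2 ^ k / 2 by positivity)]
  exact lintegral_mono
    (setLAverage_bilinearAverage_mul_le_powerMaximalFunction hθ hs hf hg hh k)

lemma lintegral_bilinearAverage_rpow_le (hr₀ : 0 < r) (hr₁ : r ≤ 1) (hθ : θ ∈ Set.Icc 0 (1 / 2))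
    (hs : 1 < s) (hf : Measurable f) (hg : Measurable g) (k : ℤ) :
    ∫⁻ x, bilinearAverage μ θ (2 ^ k / 2) f g x ^ r ∂μ ≤
      ∫⁻ z, (8 ^ finrank ℝ E * ((⨍⁻ x in closedBall z (2 ^ k), f x ∂μ) *
        powerMaximalFunction μ s g z)) ^ r ∂μ := by
  have hT : Measurable (bilinearAverage μ θ (2 ^ k / 2) f g) :=
    measurable_bilinearAverage θ _ hf hg
  rw [← lintegral_setLAverage_closedBall (hT.pow_const r)
    (show (0 : ℝ) < 2 ^ k / 2 by positivity)]
  refine lintegral_mono fun z ↦ ?_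
  have : IsFiniteMeasure (μ.restrict (closedBall z (2 ^ k / 2))) :=
    isFiniteMeasure_restrict.2 measure_closedBall_lt_top.ne
  have local_bound := setLAverage_bilinearAverage_mul_le_powerMaximalFunction (μ := μ) hθ
    (Real.HolderConjugate.conjExponent hs) hf hg measurable_one k z
  simp only [powerMaximalFunction_one, Pi.one_apply, mul_one] at local_bound
  exact (laverage_rpow_le_rpow_laverage hr₀ hr₁ hT.aemeasurable).trans
    (rpow_le_rpow local_bound hr₀.le)

variable (μ) in
lemma exists_lintegral_dyadicBilinearIntegral_rpow_le (hα : 0 < α) (hp : 1 ≤ p)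
    (hpα : p < finrank ℝ E / α) (hr₀ : 0 < r) (hr₁ : r ≤ 1) (hs : 1 < s) :
    ∃ K : ℝ≥0, ∀ θ ∈ Set.Icc (0 : ℝ) (1 / 2), ∀ f g : E → ℝ≥0∞, Measurable f → Measurable g →
      ∫⁻ x, dyadicBilinearIntegral μ α θ f g x ^ r ∂μ ≤
        K * ∫⁻ x, (hedbergMajorant μ α p f x * powerMaximalFunction μ s g x) ^ r ∂μ := by
  obtain ⟨K, hK⟩ := exists_tsum_setLAverage_rpow_le_hedbergMajorant μ hα hp hpα hr₀
  set c : ℝ≥0 := 8 ^ finrank ℝ E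
  refine ⟨c ^ r * K, fun θ hθ f g hf hg ↦ ?_⟩
  set T : ℤ → E → ℝ≥0∞ := fun k ↦ bilinearAverage μ θ (2 ^ k / 2) f g
  have hT (k : ℤ) : Measurable (T k) := measurable_bilinearAverage θ _ hf hg
  set A : ℤ → E → ℝ≥0∞ := fun k x ↦ ⨍⁻ y in closedBall x (2 ^ k), f y ∂μ
  have hA (k : ℤ) : Measurable (A k) := measurable_setLAverage_closedBall hf _
  set H := hedbergMajorant μ α p f
  have hH : Measurable H := measurable_hedbergMajorant hf
  set Q := powerMaximalFunction μ s g
  have hQ : Measurable Q := measurable_powerMaximalFunction s hg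
  calc ∫⁻ x, dyadicBilinearIntegral μ α θ f g x ^ r ∂μ
      ≤ ∫⁻ x, ∑' k : ℤ, (2 ^ (α * k)) ^ r * T k x ^ r ∂μ :=
        lintegral_mono fun x ↦ (rpow_tsum_le_tsum_rpow hr₀ hr₁ _).trans_eq <|
          tsum_congr fun k ↦ mul_rpow_of_nonneg _ _ hr₀.le
    _ = ∑' k : ℤ, (2 ^ (α * k)) ^ r * ∫⁻ x, T k x ^ r ∂μ := by
        rw [lintegral_tsum (by fun_prop)]
        exact tsum_congr fun k ↦ lintegral_const_mul _ (by fun_prop)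
    _ ≤ ∑' k : ℤ, (2 ^ (α * k)) ^ r * ∫⁻ x, (c * (A k x * Q x)) ^ r ∂μ :=
        ENNReal.tsum_le_tsum fun k ↦ mul_le_mul_right
          (lintegral_bilinearAverage_rpow_le hr₀ hr₁ hθ hs hf hg k) _
    _ = ∫⁻ x, (c * Q x) ^ r * ∑' k : ℤ, (2 ^ (α * k) * A k x) ^ r ∂μ := by
        simp_rw [← ENNReal.tsum_mul_left]
        rw [lintegral_tsum fun k ↦ by fun_prop]
        refine tsum_congr fun k ↦ ?_
        rw [← lintegral_const_mul _ (by fun_prop)]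
        simp_rw [← mul_rpow_of_nonneg _ _ hr₀.le]
        congr! 3 with x
        ring
    _ ≤ ∫⁻ x, (c * Q x) ^ r * (K * H x ^ r) ∂μ :=
        lintegral_mono fun x ↦ mul_le_mul_right (hK f hf x) _
    _ = _ := by
        rw [← lintegral_const_mul _ (by fun_prop), coe_mul, coe_rpow_of_nonneg _ hr₀.le]
        simp_rw [mul_rpow_of_nonneg _ _ hr₀.le]
        congr! 2 with x
        ring

variable (μ) in
theorem exists_eLpNorm'_dyadicBilinearIntegral_le_of_le_one (hα : 0 < α) (hp : 1 ≤ p)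
    (hpα : p < finrank ℝ E / α) (hr₀ : 0 < r) (hr₁ : r ≤ 1) (hs : 1 < s) :
    ∃ C : ℝ≥0, ∀ θ ∈ Set.Icc (0 : ℝ) (1 / 2), ∀ f g : E → ℝ≥0∞, Measurable f → Measurable g →
      eLpNorm' (dyadicBilinearIntegral μ α θ f g) r μ ≤
        C * eLpNorm' (fun x ↦ hedbergMajorant μ α p f x * powerMaximalFunction μ s g x) r μ := by
  obtain ⟨K, hK⟩ := exists_lintegral_dyadicBilinearIntegral_rpow_le μ hα hp hpα hr₀ hr₁ hs
  have hr' : 0 ≤ 1 / r := by positivity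
  refine ⟨K ^ (1 / r), fun θ hθ f g hf hg ↦
    (rpow_le_rpow (hK θ hθ f g hf hg) hr').trans_eq ?_⟩
  rw [mul_rpow_of_nonneg _ _ hr', coe_rpow_of_nonneg _ hr']
  rfl

variable (μ) in
lemma exists_lintegral_dyadicBilinearIntegral_mul_le (hα : 0 < α) (hp : 1 ≤ p)
    (hpα : p < finrank ℝ E / α) (hs : s.HolderConjugate s') :
    ∃ K : ℝ≥0, ∀ θ ∈ Set.Icc (0 : ℝ) (1 / 2), ∀ f g h : E → ℝ≥0∞,
      Measurable f → Measurable g → Measurable h →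
      ∫⁻ x, dyadicBilinearIntegral μ α θ f g x * h x ∂μ ≤
        K * ∫⁻ x, hedbergMajorant μ α p f x * powerMaximalFunction μ s g x *
          powerMaximalFunction μ s' h x ∂μ := by
  obtain ⟨K, hK⟩ := exists_tsum_setLAverage_rpow_le_hedbergMajorant μ hα hp hpα one_pos
  simp only [rpow_one] at hK
  set c : ℝ≥0 := 8 ^ finrank ℝ E
  refine ⟨c * K, fun θ hθ f g h hf hg hh ↦ ?_⟩
  set T : ℤ → E → ℝ≥0∞ := fun k ↦ bilinearAverage μ θ (2 ^ k / 2) f g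
  have hT (k : ℤ) : Measurable (T k) := measurable_bilinearAverage θ _ hf hg
  have hTh (k : ℤ) : Measurable fun x ↦ T k x * h x := (hT k).mul hh
  set A : ℤ → E → ℝ≥0∞ := fun k x ↦ ⨍⁻ y in closedBall x (2 ^ k), f y ∂μ
  have hA (k : ℤ) : Measurable (A k) := measurable_setLAverage_closedBall hf _
  set H := hedbergMajorant μ α p f
  have hH : Measurable H := measurable_hedbergMajorant hf
  set Q := powerMaximalFunction μ s g
  have hQ : Measurable Q := measurable_powerMaximalFunction s hg
  set P := powerMaximalFunction μ s' h
  have hP : Measurable P := measurable_powerMaximalFunction s' hh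
  calc ∫⁻ x, dyadicBilinearIntegral μ α θ f g x * h x ∂μ
      = ∫⁻ x, ∑' k : ℤ, 2 ^ (α * k) * (T k x * h x) ∂μ := by
        simp only [dyadicBilinearIntegral, ← ENNReal.tsum_mul_right, mul_assoc, T]
    _ = ∑' k : ℤ, 2 ^ (α * k) * ∫⁻ x, T k x * h x ∂μ := by
        rw [lintegral_tsum fun k ↦ ((hTh k).const_mul _).aemeasurable]
        exact tsum_congr fun k ↦ lintegral_const_mul _ (hTh k)
    _ ≤ ∑' k : ℤ, 2 ^ (α * k) * ∫⁻ x, c * (A k x * Q x * P x) ∂μ :=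
        ENNReal.tsum_le_tsum fun k ↦ mul_le_mul_right
          (lintegral_bilinearAverage_mul_le hθ hs hf hg hh k) _
    _ = ∫⁻ x, c * (Q x * P x) * ∑' k : ℤ, 2 ^ (α * k) * A k x ∂μ := by
        simp_rw [← ENNReal.tsum_mul_left]
        rw [lintegral_tsum fun k ↦ by fun_prop]
        refine tsum_congr fun k ↦ ?_
        rw [← lintegral_const_mul _ (by fun_prop)]
        congr! 2 with x
        ring
    _ ≤ ∫⁻ x, c * (Q x * P x) * (K * H x) ∂μ :=
        lintegral_mono fun x ↦ mul_le_mul_right (hK f hf x) _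
    _ = _ := by
        rw [← lintegral_const_mul _ (by fun_prop), coe_mul]
        congr! 2 with x
        ring

variable (μ) in
theorem exists_eLpNorm'_dyadicBilinearIntegral_le_of_one_lt (hα : 0 < α) (hp : 1 ≤ p)
    (hpα : p < finrank ℝ E / α) (hr : 1 < r) (hrs : r < s) :
    ∃ C : ℝ≥0, ∀ θ ∈ Set.Icc (0 : ℝ) (1 / 2), ∀ f g : E → ℝ≥0∞, Measurable f → Measurable g →
      eLpNorm' (dyadicBilinearIntegral μ α θ f g) r μ ≤
        C * eLpNorm' (fun x ↦ hedbergMajorant μ α p f x * powerMaximalFunction μ s g x) r μ := by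
  have r_conj := Real.HolderConjugate.conjExponent hr
  have s_conj := Real.HolderConjugate.conjExponent (hr.trans hrs)
  have conj_lt : s.conjExponent < r.conjExponent := by
    rw [← inv_lt_inv₀ r_conj.symm.pos s_conj.symm.pos, ← r_conj.one_sub_inv, ← s_conj.one_sub_inv]
    exact sub_lt_sub_left (inv_strictAnti₀ r_conj.pos hrs) 1
  obtain ⟨K, hK⟩ := exists_lintegral_dyadicBilinearIntegral_mul_le μ hα hp hpα s_conj
  obtain ⟨M, hM⟩ := exists_eLpNorm'_powerMaximalFunction_le μ s_conj.symm.pos conj_lt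
  refine ⟨K * M, fun θ hθ f g hf hg ↦
    eLpNorm'_le_of_forall_lintegral_mul_le r_conj fun h hh ↦ ?_⟩
  set F : E → ℝ≥0∞ := fun x ↦ hedbergMajorant μ α p f x * powerMaximalFunction μ s g x
  have hF : Measurable F :=
    (measurable_hedbergMajorant hf).mul (measurable_powerMaximalFunction s hg)
  set P := powerMaximalFunction μ s.conjExponent h
  have hP : Measurable P := measurable_powerMaximalFunction _ hh
  calc ∫⁻ x, dyadicBilinearIntegral μ α θ f g x * h x ∂μ
      ≤ K * ∫⁻ x, F x * P x ∂μ := hK θ hθ f g h hf hg hh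
    _ ≤ K * (eLpNorm' F r μ * eLpNorm' P r.conjExponent μ) :=
        mul_le_mul_right
          (lintegral_mul_le_Lp_mul_Lq μ r_conj hF.aemeasurable hP.aemeasurable) _
    _ ≤ K * (eLpNorm' F r μ * (M * eLpNorm' h r.conjExponent μ)) := by
        gcongr
        exact hM h hh
    _ = _ := by
        rw [coe_mul]
        ring

variable (μ) in
lemma exists_eLpNorm'_dyadicBilinearIntegral_le (hα : 0 < α) (hp : 1 < p)
    (hpα : p < finrank ℝ E / α) (hq : 1 < q)
    (hpqr : 1 / p + 1 / q = 1 / r + α / finrank ℝ E) :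
    ∃ C : ℝ≥0, ∀ θ ∈ Set.Icc (0 : ℝ) (1 / 2), ∀ f g : E → ℝ≥0∞, Measurable f → Measurable g →
      eLpNorm' (dyadicBilinearIntegral μ α θ f g) r μ ≤ C * eLpNorm' f p μ * eLpNorm' g q μ := by
  have hq₀ : 0 < q := zero_lt_one.trans hq
  obtain ⟨hr, hrq⟩ := mem_Ioo_of_one_div_add_one_div_eq (zero_lt_one.trans hp) hpα hq₀ hpqr
  obtain ⟨s, hs, hsq⟩ := exists_between (max_lt hq hrq)
  have hs₁ : 1 < s := (le_max_left 1 r).trans_lt hs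
  obtain ⟨K, hK⟩ : ∃ K : ℝ≥0, ∀ θ ∈ Set.Icc (0 : ℝ) (1 / 2), ∀ f g : E → ℝ≥0∞,
      Measurable f → Measurable g → eLpNorm' (dyadicBilinearIntegral μ α θ f g) r μ ≤
        K * eLpNorm' (fun x ↦ hedbergMajorant μ α p f x * powerMaximalFunction μ s g x) r μ := by
    rcases le_or_gt r 1 with hr₁ | hr₁
    · exact exists_eLpNorm'_dyadicBilinearIntegral_le_of_le_one μ hα hp.le hpα hr hr₁ hs₁
    · exact exists_eLpNorm'_dyadicBilinearIntegral_le_of_one_lt μ hα hp.le hpα hr₁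
        ((le_max_right 1 r).trans_lt hs)
  obtain ⟨C, hC⟩ := exists_eLpNorm'_hedbergMajorant_mul_le μ hα hp hpα
    (zero_lt_one.trans hs₁) hsq hpqr
  refine ⟨K * C, fun θ hθ f g hf hg ↦ (hK θ hθ f g hf hg).trans ?_⟩
  rw [coe_mul, mul_assoc (K : ℝ≥0∞), mul_assoc (K : ℝ≥0∞)]
  exact mul_le_mul_right (hC f g hf hg) _

variable (μ) in
theorem exists_eLpNorm'_bilinearFractionalIntegral_le_of_le_half (hα : 0 < α) (hp : 1 < p)
    (hpα : p < finrank ℝ E / α) (hq : 1 < q)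
    (hpqr : 1 / p + 1 / q = 1 / r + α / finrank ℝ E) :
    ∃ C : ℝ≥0, ∀ θ ∈ Set.Icc (0 : ℝ) (1 / 2), ∀ f g : E → ℝ≥0∞, Measurable f → Measurable g →
      eLpNorm' (bilinearFractionalIntegral μ α θ f g) r μ ≤
        C * eLpNorm' f p μ * eLpNorm' g q μ := by
  have hαd : α < finrank ℝ E := (one_lt_div hα).1 (hp.trans hpα)
  have hr : 0 < r :=
    (mem_Ioo_of_one_div_add_one_div_eq (zero_lt_one.trans hp) hpα (zero_lt_one.trans hq) hpqr).1
  obtain ⟨C, hC⟩ := exists_eLpNorm'_dyadicBilinearIntegral_le μ hα hp hpα hq hpqr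
  set c : ℝ≥0∞ := 4 ^ (finrank ℝ E - α) * μ (closedBall 0 1)
  have hc : c ≠ ∞ := mul_ne_top (by finiteness) measure_closedBall_lt_top.ne
  refine ⟨c.toNNReal * C, fun θ hθ f g hf hg ↦ ?_⟩
  calc eLpNorm' (bilinearFractionalIntegral μ α θ f g) r μ
      ≤ c * eLpNorm' (dyadicBilinearIntegral μ α θ f g) r μ :=
        eLpNorm'_le_mul_eLpNorm'_of_ae_le_mul
          (measurable_dyadicBilinearIntegral α θ hf hg).aestronglyMeasurable
          (.of_forall
            (bilinearFractionalIntegral_le_mul_dyadicBilinearIntegral hαd θ hf hg)) hr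
    _ ≤ c * (C * eLpNorm' f p μ * eLpNorm' g q μ) := mul_le_mul_right (hC θ hθ f g hf hg) _
    _ = _ := by rw [coe_mul, coe_toNNReal hc, mul_assoc c, mul_assoc c]

variable (μ) in
theorem stmt0_general (hα : 0 < α) (hp : 1 < p) (hpα : p < finrank ℝ E / α) (hq : 1 < q)
    (hqα : q < finrank ℝ E / α) (hpqr : 1 / p + 1 / q = 1 / r + α / finrank ℝ E) :
    ∃ C : ℝ, 0 < C ∧ ∀ θ ∈ Set.Icc (0 : ℝ) 1, ∀ f g : E → ℝ≥0∞, Measurable f → Measurable g →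
      eLpNorm' (bilinearFractionalIntegral μ α θ f g) r μ ≤
        ENNReal.ofReal C * eLpNorm' f p μ * eLpNorm' g q μ := by
  obtain ⟨C₁, hC₁⟩ :=
    exists_eLpNorm'_bilinearFractionalIntegral_le_of_le_half μ hα hp hpα hq hpqr
  obtain ⟨C₂, hC₂⟩ := exists_eLpNorm'_bilinearFractionalIntegral_le_of_le_half μ hα hq hqα hp
    (by rwa [add_comm])
  refine ⟨C₁ + C₂ + 1, by positivity, fun θ ⟨hθ₀, hθ₁⟩ f g hf hg ↦ ?_⟩
  rw [show (C₁ + C₂ + 1 : ℝ) = (C₁ + C₂ + 1 : ℝ≥0) by push_cast; rfl, ofReal_coe_nnreal]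
  rcases le_total θ (1 / 2) with hθ | hθ
  · refine (hC₁ θ ⟨hθ₀, hθ⟩ f g hf hg).trans ?_
    gcongr
    exact le_add_right le_self_add
  · rw [bilinearFractionalIntegral_swap]
    refine (hC₂ (1 - θ) ⟨by linarith, by linarith⟩ g f hg hf).trans ?_
    rw [mul_right_comm]
    gcongr
    exact le_add_right le_add_self

end BilinearFractionalIntegral

theorem stmt0 (d : ℕ) (α p q r : ℝ) (hα0 : 0 < α) (hαd : α < d)
    (hp1 : 1 < p) (hpd : p < d / α) (hq1 : 1 < q) (hqd : q < d / α)
    (hpqr : 1 / p + 1 / q = 1 / r + α / d) :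
    ∃ C : ℝ, 0 < C ∧
      ∀ θ : ℝ, θ ∈ Set.Icc (0 : ℝ) 1 →
        ∀ f g : EuclideanSpace ℝ (Fin d) → ℝ≥0∞,
          Measurable f → Measurable g →
          LpNorm d p f < ∞ → LpNorm d q g < ∞ →
          LpNorm d r (Iop d α θ f g) ≤
            ENNReal.ofReal C * LpNorm d p f * LpNorm d q g := by
  rw [← finrank_euclideanSpace_fin (𝕜 := ℝ) (n := d)] at hpd hqd hpqr
  obtain ⟨C, hC, bound⟩ := stmt0_general volume hα0 hp1 hpd hq1 hqd hpqr
  refine ⟨C, hC, fun θ hθ f g hf hg _ _ ↦ ?_⟩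
  have operator_eq : Iop d α θ f g = bilinearFractionalIntegral volume α θ f g := by
    unfold Iop bilinearFractionalIntegral
    rw [finrank_euclideanSpace_fin]
  exact operator_eq ▸ bound θ hθ f g hf hg
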